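/- Let ℓ be an odd prime, q a prime power coprime to ℓ, t the multiplicative order of q modulo ℓ, and τ = v_ℓ(q^t − 1). Let λ be a partition of n and let H_t(λ) denote the multiset of hooks of λ of length divisible by t. Then v_ℓ(d_λ(q)) = (⌊n/t⌋ − |H_t(λ)|)·τ + v_ℓ( ⌊n/t⌋! / ∏_{h ∈ H_t(λ)} (|h|/t) ). In particular v_ℓ(d_λ(q)) ≥ ⌊n/t⌋ − |H_t(λ)| + v_ℓ( ⌊n/t⌋! / ∏_{h ∈ H_t(λ)} (|h|/t) ). -/

import Mathlib

/-- The `i`-th part (0-indexed, parts in weakly decreasing order) of the partition whose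
multiset of parts is `lam`; `0` if `i` is at least the number of parts. -/
def partNth (lam : Multiset ℕ) (i : ℕ) : ℕ :=
  ((lam.sort (· ≤ ·)).reverse.getD i 0)

/-- The `j`-th part (0-indexed) of the conjugate partition: the number of parts `> j`. -/
def conjNth (lam : Multiset ℕ) (j : ℕ) : ℕ :=
  (lam.filter (fun m => j < m)).card

/-- The cells `(i, j)` (0-indexed) of the Young diagram of `lam`. -/
def cellsOf (lam : Multiset ℕ) : Finset (ℕ × ℕ) :=
  (Finset.range (Multiset.card lam) ×ˢ Finset.range lam.sum).filter
    (fun c => c.2 < partNth lam c.1)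

/-- The hook length of the cell `c = (i, j)` of `lam`:
`(λᵢ − j) + (λ'ⱼ − i) − 1`. -/
def hookLen (lam : Multiset ℕ) (c : ℕ × ℕ) : ℕ :=
  (partNth lam c.1 - c.2) + (conjNth lam c.2 - c.1) - 1

/-- The product of all hook lengths of `lam`. -/
def hookProd (lam : Multiset ℕ) : ℕ :=
  ∏ c ∈ cellsOf lam, hookLen lam c

/-- `α(λ) = Σᵢ (i − 1)·λᵢ` (1-indexed), i.e. `Σᵢ i·λᵢ` for the 0-indexed parts. -/
def alphaStat (lam : Multiset ℕ) : ℕ :=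
  ∑ i ∈ Finset.range (Multiset.card lam), i * partNth lam i

/-- `𝔣_λ = n! / ∏_{h ∈ H(λ)} |h|`, the degree of the irreducible character of `S_n`
indexed by `λ`, as a rational number. -/
def fDeg (lam : Multiset ℕ) : ℚ :=
  (Nat.factorial lam.sum : ℚ) / (hookProd lam : ℚ)

/-- `d_λ(x) = x^{α(λ)} · ∏_{i=1}^{n} (x^i − 1) / ∏_{h ∈ H(λ)} (x^{|h|} − 1)`. -/
def dDeg (lam : Multiset ℕ) (x : ℕ) : ℚ :=
  (x : ℚ) ^ alphaStat lam * (∏ i ∈ Finset.Icc 1 lam.sum, ((x : ℚ) ^ i - 1)) /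
    ∏ c ∈ cellsOf lam, ((x : ℚ) ^ hookLen lam c - 1)

/-!
Lifting the exponent gives `v_ℓ (q ^ k - 1) = τ + v_ℓ (k / t)` if `t ∣ k` and `0` otherwise, so only
the factors of `d_λ(q)` with exponent divisible by `t` contribute, which is the formula.

As `τ ≥ 1`, the inequality amounts to `t * |H_t(λ)| ≤ n`. Place a bead at each β-number
`λᵢ + m - 1 - i` (`m` the number of parts) of an abacus with `t` runners. The hooks of `λ` are the
pairs of a bead and a gap below it, the hook length being their distance, so a hook of length
divisible by `t` lets its bead slide along its own runner. Pushing all beads down as far as they go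
lowers the sum of their positions by exactly `t * |H_t(λ)|`. As `m` distinct naturals have sum at
least `0 + ⋯ + (m - 1)`, and the β-numbers have sum `n + (0 + ⋯ + (m - 1))`, the claim follows.
-/

open Finset
open scoped Nat

section Abacus

theorem sum_range_card_le_sum_of_injOn {ι : Type*} {s : Finset ι} {f : ι → ℕ}
    (hf : Set.InjOn f s) : ∑ i ∈ range #s, i ≤ ∑ i ∈ s, f i := by
  have hf' : Set.InjOn (fun i => (f i : ℤ)) s := fun i hi j hj hij =>
    hf hi hj (Int.ofNat_inj.1 hij)
  have h := sum_range_le_sum (s := s.image fun i => (f i : ℤ)) (c := 0) (by simp)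
  rw [card_image_of_injOn hf', sum_image hf'] at h
  rw [← Nat.cast_le (α := ℤ)]
  simpa only [zero_add, Nat.cast_sum] using h

variable {t : ℕ} {X : Finset ℕ}

/-- The gaps below `x`, on the same runner of the abacus with `t` runners, left by beads at the
positions in `X`. -/
def runnerGaps (t : ℕ) (X : Finset ℕ) (x : ℕ) : Finset ℕ :=
  {y ∈ range x | y ∉ X ∧ y ≡ x [MOD t]}

/-- The final position of the bead at `x` once all beads in `X` have been pushed down along the
runners of the abacus with `t` runners as far as they go. -/
def pushedBead (t : ℕ) (X : Finset ℕ) (x : ℕ) : ℕ :=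
  x % t + t * #{y ∈ X | y < x ∧ y ≡ x [MOD t]}

theorem mul_card_runnerGaps_add_pushedBead (ht : 0 < t) (x : ℕ) :
    t * #(runnerGaps t X x) + pushedBead t X x = x := by
  have hcount : #{y ∈ range x | y ≡ x [MOD t]} = x / t := by
    rw [← Nat.count_eq_card_filter_range, Nat.count_modEq_card _ ht, if_neg (lt_irrefl _),
      add_zero]
  have hsplit : #{y ∈ X | y < x ∧ y ≡ x [MOD t]} + #(runnerGaps t X x) = x / t := by
    rw [← hcount, ← card_filter_add_card_filter_not (s := {y ∈ range x | y ≡ x [MOD t]}) (· ∈ X)]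
    congr 2 <;> ext y <;> simp only [runnerGaps, mem_filter, mem_range] <;> tauto
  calc t * #(runnerGaps t X x) + pushedBead t X x
      = t * (#{y ∈ X | y < x ∧ y ≡ x [MOD t]} + #(runnerGaps t X x)) + x % t := by
        rw [pushedBead]; ring
    _ = x := by rw [hsplit, Nat.div_add_mod]

theorem pushedBead_ne_of_lt (ht : 0 < t) {x y : ℕ} (hx : x ∈ X) (hxy : x < y) :
    pushedBead t X x ≠ pushedBead t X y := by
  intro h
  have hmod : x ≡ y [MOD t] := by
    simpa [pushedBead, Nat.ModEq] using congrArg (· % t) h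
  have hcard : #{z ∈ X | z < x ∧ z ≡ x [MOD t]} = #{z ∈ X | z < y ∧ z ≡ y [MOD t]} := by
    rw [pushedBead, pushedBead, show x % t = y % t from hmod] at h
    exact Nat.eq_of_mul_eq_mul_left ht (Nat.add_left_cancel h)
  refine (card_lt_card (ssubset_iff_of_subset ?_ |>.2 ⟨x, ?_, ?_⟩)).ne hcard
  · exact fun z hz => by
      simp only [mem_filter] at hz ⊢
      exact ⟨hz.1, hz.2.1.trans hxy, hz.2.2.trans hmod⟩
  · simp [hx, hxy, hmod]
  · simp

theorem pushedBead_injOn (ht : 0 < t) : Set.InjOn (pushedBead t X) X := by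
  intro x hx y hy h
  by_contra hne
  rcases Nat.lt_or_gt_of_ne hne with hxy | hyx
  · exact pushedBead_ne_of_lt ht hx hxy h
  · exact pushedBead_ne_of_lt ht hy hyx h.symm

theorem mul_sum_card_runnerGaps_add_le (ht : 0 < t) :
    t * ∑ x ∈ X, #(runnerGaps t X x) + ∑ i ∈ range #X, i ≤ ∑ x ∈ X, x :=
  calc t * ∑ x ∈ X, #(runnerGaps t X x) + ∑ i ∈ range #X, i
      ≤ t * ∑ x ∈ X, #(runnerGaps t X x) + ∑ x ∈ X, pushedBead t X x := by
        gcongr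
        exact sum_range_card_le_sum_of_injOn (pushedBead_injOn ht)
    _ = ∑ x ∈ X, x := by
        rw [mul_sum, ← sum_add_distrib]
        exact sum_congr rfl fun x _ => mul_card_runnerGaps_add_pushedBead ht x

end Abacus

section Diagram

theorem lt_getD_iff_lt_countP {α : Type*} [LinearOrder α] [OrderBot α] {L : List α}
    (hL : L.SortedGE) (i : ℕ) (a : α) :
    a < L.getD i ⊥ ↔ i < L.countP (a < ·) := by
  induction L generalizing i with
  | nil => simp
  | cons b L ih =>
    obtain ⟨hb, hL⟩ := List.pairwise_cons.1 hL.pairwise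
    specialize ih hL.sortedGE
    by_cases hab : a < b
    · cases i <;> simp [-List.getD_eq_getElem?_getD, List.getD_cons_zero,
        List.getD_cons_succ, hab, ih]
    · have hcount : L.countP (a < ·) = 0 :=
        List.countP_eq_zero.2 fun c hc => by simpa using (hb c hc).trans (not_lt.1 hab)
      cases i <;> simp [-List.getD_eq_getElem?_getD, List.getD_cons_zero,
        List.getD_cons_succ, hab, hcount, ih]

theorem sum_range_length_getD {M : Type*} [AddCommMonoid M] (L : List M) :
    ∑ i ∈ range L.length, L.getD i 0 = L.sum := by
  simp [sum_range]

variable (lam : Multiset ℕ)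

theorem lt_partNth_iff {i j : ℕ} : j < partNth lam i ↔ i < conjNth lam j := by
  have hsorted : (lam.sort (· ≤ ·)).reverse.SortedGE :=
    List.sortedGE_reverse.2 (lam.pairwise_sort (· ≤ ·)).sortedLE
  have hconj : conjNth lam j = (lam.sort (· ≤ ·)).reverse.countP (j < ·) := by
    rw [conjNth, ← Multiset.countP_eq_card_filter, List.countP_reverse, ← Multiset.coe_countP,
      Multiset.sort_eq]
  rw [hconj]
  exact lt_getD_iff_lt_countP hsorted i j

theorem partNth_antitone : Antitone (partNth lam) := fun _ _ hik =>
  le_of_forall_lt fun _ hj => (lt_partNth_iff lam).2 (hik.trans_lt ((lt_partNth_iff lam).1 hj))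

theorem conjNth_antitone : Antitone (conjNth lam) := fun _ _ hjk =>
  le_of_forall_lt fun _ hi => (lt_partNth_iff lam).1 (hjk.trans_lt ((lt_partNth_iff lam).2 hi))

theorem conjNth_le_card (j : ℕ) : conjNth lam j ≤ lam.card :=
  Multiset.card_le_card (Multiset.filter_le _ _)

theorem sum_partNth : ∑ i ∈ range lam.card, partNth lam i = lam.sum := by
  have h := sum_range_length_getD (lam.sort (· ≤ ·)).reverse
  rwa [List.length_reverse, Multiset.length_sort, List.sum_reverse, ← Multiset.sum_coe,
    Multiset.sort_eq] at h

variable {lam}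

theorem lt_partNth_of_mem_cellsOf {c : ℕ × ℕ} (hc : c ∈ cellsOf lam) : c.2 < partNth lam c.1 :=
  (mem_filter.1 hc).2

theorem lt_card_of_mem_cellsOf {c : ℕ × ℕ} (hc : c ∈ cellsOf lam) : c.1 < lam.card :=
  mem_range.1 (mem_product.1 (mem_filter.1 hc).1).1

theorem hookLen_pos {c : ℕ × ℕ} (hc : c ∈ cellsOf lam) : 0 < hookLen lam c := by
  have hj := lt_partNth_of_mem_cellsOf hc
  have hi := (lt_partNth_iff lam).1 hj
  grind [hookLen]

end Diagram

section BetaNumbers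

/-- The `i`-th β-number `λᵢ + m - 1 - i` (0-indexed) of a partition with `m` parts; meaningful for
`i < m` only. -/
def betaNumber (lam : Multiset ℕ) (i : ℕ) : ℕ :=
  partNth lam i + (lam.card - 1 - i)

/-- The `j`-th natural number (0-indexed) that is not a β-number of the partition with `m` parts,
namely `j + m - λ'ⱼ`. -/
def betaGap (lam : Multiset ℕ) (j : ℕ) : ℕ :=
  j + (lam.card - conjNth lam j)

/-- The β-set (first-column hook lengths) of a partition. -/
def betaSet (lam : Multiset ℕ) : Finset ℕ :=
  (range lam.card).image (betaNumber lam)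

variable {lam : Multiset ℕ}

theorem betaNumber_injOn : Set.InjOn (betaNumber lam) (range lam.card) := by
  have hanti : StrictAntiOn (betaNumber lam) (range lam.card) := by
    intro i hi k hk hik
    have := partNth_antitone lam hik.le
    rw [coe_range, Set.mem_Iio] at hi hk
    grind [betaNumber]
  exact hanti.injOn

theorem betaGap_strictMono : StrictMono (betaGap lam) := by
  intro j k hjk
  have := conjNth_antitone lam hjk.le
  grind [betaGap]

theorem betaGap_notMem_betaSet (j : ℕ) : betaGap lam j ∉ betaSet lam := by
  intro h
  obtain ⟨i, hi, hij⟩ := mem_image.1 h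
  rw [mem_range] at hi
  have := lt_partNth_iff lam (i := i) (j := j)
  have := conjNth_le_card lam j
  grind [betaNumber, betaGap]

theorem betaGap_add_hookLen {c : ℕ × ℕ} (hc : c ∈ cellsOf lam) :
    betaGap lam c.2 + hookLen lam c = betaNumber lam c.1 := by
  have hj := lt_partNth_of_mem_cellsOf hc
  have hi := (lt_partNth_iff lam).1 hj
  have := conjNth_le_card lam c.2
  grind [betaNumber, betaGap, hookLen]

theorem card_betaSet : #(betaSet lam) = lam.card := by
  rw [betaSet, card_image_of_injOn betaNumber_injOn, card_range]

theorem sum_betaSet : ∑ x ∈ betaSet lam, x = lam.sum + ∑ i ∈ range lam.card, i := by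
  rw [betaSet, sum_image betaNumber_injOn]
  simp only [betaNumber]
  rw [sum_add_distrib, sum_partNth, sum_range_reflect (fun i => i)]

theorem card_filter_dvd_hookLen_le_sum_card_runnerGaps (t : ℕ) :
    #{c ∈ cellsOf lam | t ∣ hookLen lam c} ≤
      ∑ x ∈ betaSet lam, #(runnerGaps t (betaSet lam) x) := by
  rw [← card_sigma]
  refine card_le_card_of_injOn (fun c => ⟨betaNumber lam c.1, betaGap lam c.2⟩) ?_ ?_
  · intro c hc
    obtain ⟨hcell, hdvd⟩ := mem_filter.1 hc
    have hadd := betaGap_add_hookLen hcell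
    have hlt : betaGap lam c.2 < betaNumber lam c.1 := by
      have := hookLen_pos hcell
      lia
    have hmod : betaGap lam c.2 ≡ betaNumber lam c.1 [MOD t] :=
      (Nat.modEq_iff_dvd' hlt.le).2 (by rwa [← hadd, Nat.add_sub_cancel_left])
    exact mem_sigma.2 ⟨mem_image_of_mem _ (mem_range.2 (lt_card_of_mem_cellsOf hcell)),
      mem_filter.2 ⟨mem_range.2 hlt, betaGap_notMem_betaSet _, hmod⟩⟩
  · intro c hc d hd hcd
    obtain ⟨hbead, hgap⟩ := Sigma.mk.inj hcd
    have hrow (e : ℕ × ℕ) (he : e ∈ filter (t ∣ hookLen lam ·) (cellsOf lam)) :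
        e.1 ∈ range lam.card := mem_range.2 (lt_card_of_mem_cellsOf (mem_filter.1 he).1)
    exact Prod.ext (betaNumber_injOn (hrow c hc) (hrow d hd) hbead)
      (betaGap_strictMono.injective (eq_of_heq hgap))

theorem card_filter_dvd_hookLen_le_sum_div {t : ℕ} (ht : 0 < t) :
    #{c ∈ cellsOf lam | t ∣ hookLen lam c} ≤ lam.sum / t := by
  have habacus := mul_sum_card_runnerGaps_add_le (X := betaSet lam) ht
  rw [card_betaSet, sum_betaSet, Nat.add_le_add_iff_right] at habacus
  rw [Nat.le_div_iff_mul_le ht, mul_comm]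
  exact (Nat.mul_le_mul_left t (card_filter_dvd_hookLen_le_sum_card_runnerGaps t)).trans habacus

end BetaNumbers

section Valuation

theorem padicValNat_prod {ι : Type*} {p : ℕ} [hp : Fact p.Prime] {s : Finset ι} {f : ι → ℕ}
    (hf : ∀ i ∈ s, f i ≠ 0) : padicValNat p (∏ i ∈ s, f i) = ∑ i ∈ s, padicValNat p (f i) := by
  simpa only [Nat.factorization_def _ hp.out] using Nat.factorization_prod_apply (p := p) hf

theorem dvd_pow_sub_one_iff_orderOf_dvd {m q : ℕ} (hq : 0 < q) {k : ℕ} :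
    m ∣ q ^ k - 1 ↔ orderOf (q : ZMod m) ∣ k := by
  rw [orderOf_dvd_iff_pow_eq_one, ← ZMod.natCast_eq_zero_iff, Nat.cast_pred (pow_pos hq k),
    sub_eq_zero, Nat.cast_pow]

theorem prod_filter_dvd_Icc_div (t n : ℕ) : ∏ k ∈ Icc 1 n with t ∣ k, k / t = (n / t)! := by
  induction n with
  | zero => simp
  | succ n ih =>
    rw [prod_filter] at ih ⊢
    rw [prod_Icc_succ_top (by lia), ih]
    split_ifs with hdvd
    · rw [Nat.succ_div_of_dvd hdvd, Nat.factorial_succ, mul_comm]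
    · rw [Nat.succ_div_of_not_dvd hdvd, mul_one]

theorem div_ne_zero_of_dvd {t k : ℕ} (hdvd : t ∣ k) (hk : k ≠ 0) : k / t ≠ 0 :=
  (Nat.div_ne_zero_iff_of_dvd hdvd).2 ⟨hk, ne_zero_of_dvd_ne_zero hk hdvd⟩

theorem orderOf_natCast_pos_of_coprime {m q : ℕ} [NeZero m] (hco : q.Coprime m) :
    0 < orderOf (q : ZMod m) :=
  orderOf_pos_iff.2 (isOfFinOrder_iff_isUnit.2 ((ZMod.isUnit_iff_coprime q m).2 hco))

variable {ℓ q t : ℕ} [hℓ : Fact ℓ.Prime]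

theorem padicValNat_pow_sub_one (hodd : Odd ℓ) (hq : 1 < q) (ht : t = orderOf (q : ZMod ℓ))
    {k : ℕ} (hk : k ≠ 0) :
    padicValNat ℓ (q ^ k - 1) =
      if t ∣ k then padicValNat ℓ (q ^ t - 1) + padicValNat ℓ (k / t) else 0 := by
  have hdvd_iff (j : ℕ) : ℓ ∣ q ^ j - 1 ↔ t ∣ j :=
    ht ▸ dvd_pow_sub_one_iff_orderOf_dvd (zero_lt_one.trans hq)
  split_ifs with htk
  · obtain ⟨d, rfl⟩ := htk
    obtain ⟨ht0, hd0⟩ := mul_ne_zero_iff.1 hk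
    have hdvd : ℓ ∣ q ^ t - 1 := (hdvd_iff t).2 dvd_rfl
    have hlt : 1 < q ^ t := Nat.one_lt_pow ht0 hq
    have hndvd : ¬ ℓ ∣ q ^ t := fun h =>
      hℓ.out.one_lt.ne' (Nat.dvd_one.1 ((Nat.dvd_sub_iff_right hlt.le h).1 hdvd))
    rw [Nat.mul_div_cancel_left d (Nat.pos_of_ne_zero ht0)]
    have hlte := padicValNat.pow_sub_pow hodd hlt hdvd hndvd hd0
    rwa [one_pow, ← pow_mul] at hlte
  · exact padicValNat.eq_zero_of_not_dvd ((hdvd_iff k).not.2 htk)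

theorem padicValRat_prod_pow_sub_one {ι : Type*} (hodd : Odd ℓ) (hq : 1 < q)
    (ht : t = orderOf (q : ZMod ℓ)) {s : Finset ι} {f : ι → ℕ} (hf : ∀ i ∈ s, f i ≠ 0) :
    padicValRat ℓ (∏ i ∈ s, ((q : ℚ) ^ f i - 1)) =
      #{i ∈ s | t ∣ f i} * padicValNat ℓ (q ^ t - 1) +
        padicValRat ℓ (∏ i ∈ s with t ∣ f i, ((f i / t : ℕ) : ℚ)) := by
  have hcast : ∏ i ∈ s, ((q : ℚ) ^ f i - 1) = ((∏ i ∈ s, (q ^ f i - 1) : ℕ) : ℚ) := by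
    rw [Nat.cast_prod]
    refine prod_congr rfl fun i _ => ?_
    rw [Nat.cast_pred (by positivity), Nat.cast_pow]
  have hfactor : ∀ i ∈ s, q ^ f i - 1 ≠ 0 := fun i hi =>
    (Nat.sub_pos_of_lt (Nat.one_lt_pow (hf i hi) hq)).ne'
  have hquot : ∀ i ∈ s.filter (t ∣ f ·), f i / t ≠ 0 := fun i hi =>
    div_ne_zero_of_dvd (mem_filter.1 hi).2 (hf i (mem_filter.1 hi).1)
  rw [hcast, ← Nat.cast_prod, padicValRat.of_nat, padicValRat.of_nat, padicValNat_prod hfactor,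
    padicValNat_prod hquot, sum_congr rfl fun i hi => padicValNat_pow_sub_one hodd hq ht (hf i hi),
    ← sum_filter, sum_add_distrib, sum_const, smul_eq_mul]
  push_cast
  rfl

theorem padicValRat_prod_Icc_pow_sub_one (hodd : Odd ℓ) (hq : 1 < q)
    (ht : t = orderOf (q : ZMod ℓ)) (n : ℕ) :
    padicValRat ℓ (∏ k ∈ Icc 1 n, ((q : ℚ) ^ k - 1)) =
      (n / t : ℕ) * padicValNat ℓ (q ^ t - 1) + padicValRat ℓ ((n / t)! : ℚ) := by
  have hcard : #{k ∈ Icc 1 n | t ∣ k} = n / t := Nat.Ioc_filter_dvd_card_eq_div n t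
  have hpos : ∀ k ∈ Icc 1 n, k ≠ 0 := fun k hk => Nat.one_le_iff_ne_zero.1 (mem_Icc.1 hk).1
  rw [padicValRat_prod_pow_sub_one (f := fun k => k) hodd hq ht hpos, hcard, ← Nat.cast_prod,
    prod_filter_dvd_Icc_div]

theorem padicValRat_dDeg (hodd : Odd ℓ) (hq : 1 < q) (hco : q.Coprime ℓ)
    (ht : t = orderOf (q : ZMod ℓ)) (lam : Multiset ℕ) :
    padicValRat ℓ (dDeg lam q) =
      ((lam.sum / t : ℕ) - (#{c ∈ cellsOf lam | t ∣ hookLen lam c} : ℤ)) *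
          padicValNat ℓ (q ^ t - 1) +
        padicValRat ℓ (((lam.sum / t)! : ℚ) /
          ∏ c ∈ cellsOf lam with t ∣ hookLen lam c, ((hookLen lam c / t : ℕ) : ℚ)) := by
  have hhook : ∀ c ∈ cellsOf lam, hookLen lam c ≠ 0 := fun c hc => (hookLen_pos hc).ne'
  have hfactor {k : ℕ} (hk : k ≠ 0) : (q : ℚ) ^ k - 1 ≠ 0 :=
    sub_ne_zero.2 (one_lt_pow₀ (Nat.one_lt_cast.2 hq) hk).ne'
  have hpow : (q : ℚ) ^ alphaStat lam ≠ 0 := by positivity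
  have hnum : ∏ k ∈ Icc 1 lam.sum, ((q : ℚ) ^ k - 1) ≠ 0 :=
    prod_ne_zero_iff.2 fun k hk => hfactor (Nat.one_le_iff_ne_zero.1 (mem_Icc.1 hk).1)
  have hden : ∏ c ∈ cellsOf lam, ((q : ℚ) ^ hookLen lam c - 1) ≠ 0 :=
    prod_ne_zero_iff.2 fun c hc => hfactor (hhook c hc)
  have hquot :
      ∏ c ∈ cellsOf lam with t ∣ hookLen lam c, ((hookLen lam c / t : ℕ) : ℚ) ≠ 0 :=
    prod_ne_zero_iff.2 fun c hc =>
      Nat.cast_ne_zero.2 (div_ne_zero_of_dvd (mem_filter.1 hc).2 (hhook c (mem_filter.1 hc).1))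
  have hunit : padicValRat ℓ (q : ℚ) = 0 := by
    rw [padicValRat.of_nat, padicValNat.eq_zero_of_not_dvd
      ((Nat.Prime.coprime_iff_not_dvd hℓ.out).1 hco.symm), Nat.cast_zero]
  rw [dDeg, padicValRat.div (mul_ne_zero hpow hnum) hden, padicValRat.mul hpow hnum,
    padicValRat.pow, hunit, mul_zero, zero_add, padicValRat_prod_Icc_pow_sub_one hodd hq ht,
    padicValRat_prod_pow_sub_one hodd hq ht hhook,
    padicValRat.div (Nat.cast_ne_zero.2 (Nat.factorial_ne_zero _)) hquot]
  ring

theorem one_le_padicValNat_pow_orderOf_sub_one (hq : 1 < q) (hco : q.Coprime ℓ) :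
    1 ≤ padicValNat ℓ (q ^ orderOf (q : ZMod ℓ) - 1) := by
  have hlt : 1 < q ^ orderOf (q : ZMod ℓ) :=
    Nat.one_lt_pow (orderOf_natCast_pos_of_coprime hco).ne' hq
  exact one_le_padicValNat_of_dvd (Nat.sub_pos_of_lt hlt).ne'
    ((dvd_pow_sub_one_iff_orderOf_dvd (zero_lt_one.trans hq)).2 dvd_rfl)

end Valuation

theorem ell_adic_valuation_of_unipotent_degree_general {ℓ q t : ℕ} [Fact ℓ.Prime] (hodd : Odd ℓ)
    (hq : 1 < q) (hco : q.Coprime ℓ) (ht : t = orderOf (q : ZMod ℓ)) (lam : Multiset ℕ) :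
    padicValRat ℓ (dDeg lam q) =
        ((lam.sum / t : ℕ) - (#{c ∈ cellsOf lam | t ∣ hookLen lam c} : ℤ)) *
            padicValNat ℓ (q ^ t - 1) +
          padicValRat ℓ (((lam.sum / t)! : ℚ) /
            ∏ c ∈ cellsOf lam with t ∣ hookLen lam c, ((hookLen lam c / t : ℕ) : ℚ)) ∧
      ((lam.sum / t : ℕ) - (#{c ∈ cellsOf lam | t ∣ hookLen lam c} : ℤ)) +
          padicValRat ℓ (((lam.sum / t)! : ℚ) /
            ∏ c ∈ cellsOf lam with t ∣ hookLen lam c, ((hookLen lam c / t : ℕ) : ℚ)) ≤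
        padicValRat ℓ (dDeg lam q) := by
  have hformula := padicValRat_dDeg hodd hq hco ht lam
  refine ⟨hformula, ?_⟩
  rw [hformula]
  have ht_pos : 0 < t := ht ▸ orderOf_natCast_pos_of_coprime hco
  have hτ : (1 : ℤ) ≤ padicValNat ℓ (q ^ t - 1) := by
    exact_mod_cast ht ▸ one_le_padicValNat_pow_orderOf_sub_one hq hco
  have hcard : (#{c ∈ cellsOf lam | t ∣ hookLen lam c} : ℤ) ≤ (lam.sum / t : ℕ) := by
    exact_mod_cast card_filter_dvd_hookLen_le_sum_div ht_pos
  gcongr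
  exact le_mul_of_one_le_right (sub_nonneg.2 hcard) hτ

theorem ell_adic_valuation_of_unipotent_degree
    (ℓ : ℕ) (hℓ : ℓ.Prime) (hodd : Odd ℓ)
    (q : ℕ) (hq : IsPrimePow q) (hco : Nat.Coprime q ℓ)
    (t : ℕ) (ht : t = orderOf (q : ZMod ℓ))
    (τ : ℕ) (hτ : τ = padicValNat ℓ (q ^ t - 1))
    (n : ℕ) (lam : n.Partition)
    (Ht : Finset (ℕ × ℕ)) (hHt : Ht = (cellsOf lam.parts).filter (fun c => t ∣ hookLen lam.parts c)) :
    padicValRat ℓ (dDeg lam.parts q) =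
        ((n / t : ℕ) - (Ht.card : ℤ)) * τ +
          padicValRat ℓ
            ((Nat.factorial (n / t) : ℚ) / ∏ c ∈ Ht, ((hookLen lam.parts c / t : ℕ) : ℚ)) ∧
      ((n / t : ℕ) - (Ht.card : ℤ)) +
          padicValRat ℓ
            ((Nat.factorial (n / t) : ℚ) / ∏ c ∈ Ht, ((hookLen lam.parts c / t : ℕ) : ℚ)) ≤
        padicValRat ℓ (dDeg lam.parts q) := by
  subst hHt hτ
  have := Fact.mk hℓ
  simpa only [lam.parts_sum] using
    ell_adic_valuation_of_unipotent_degree_general hodd hq.one_lt hco ht lam.parts
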